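/- arXiv:1604.08558 — 4 statements merged into one kernel-verified Lean document; each statement's English description precedes it below -/
import Mathlib

section
/- Let R and S be equivalence relations on List Bool. If R is kernel dense and S is kernel sparse, then there is no polynomially length-bounded kernel reduction from R to S; that is, there is no function f : List Bool → List Bool together with a polynomial p : Polynomial ℕ such that (f x).length ≤ p.eval x.length for all x and, for all x y, R x y ↔ S (f x) (f y). -/
/-- `numClasses R n` is `#R(n)`: the number of equivalence classes of `R`
containing some string of length at most `n`. -/
noncomputable def numClasses (R : Setoid (List Bool)) (n : ℕ) : ℕ :=
  (Quotient.mk R '' {w : List Bool | w.length ≤ n}).ncard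

/-- `R` is kernel sparse if `#R(n)` is polynomially bounded. -/
def KernelSparse (R : Setoid (List Bool)) : Prop :=
  ∃ q : Polynomial ℕ, ∀ n : ℕ, numClasses R n ≤ q.eval n

/-- `R` is kernel dense if `#R(n)` exceeds every polynomial for some `n`. -/
def KernelDense (R : Setoid (List Bool)) : Prop :=
  ∀ p : Polynomial ℕ, ∃ n : ℕ, numClasses R n > p.eval n

/-!
If `S (f x) (f y)` implies `R x y`, then the `S`-class of `f x` determines the `R`-class of `x`.
When moreover `|f x| ≤ p(|x|)`, monotonicity of `p` makes `f` send strings of length at most `n` to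
strings of length at most `p(n)`, so `#R(n) ≤ #S(p(n))`. A polynomial bound `q` for `#S` then gives
the polynomial bound `q ∘ p` for `#R`, whereas `R` is dense exactly when it is not sparse.
-/

theorem monotone_polynomial_eval {K : Type*} [Semiring K] [PartialOrder K]
    [CanonicallyOrderedAdd K] (p : Polynomial K) : Monotone fun x ↦ p.eval x := by
  intro x y hxy
  simp only [Polynomial.eval_eq_sum_range]
  gcongr

theorem kernelDense_iff_not_kernelSparse {R : Setoid (List Bool)} :
    KernelDense R ↔ ¬ KernelSparse R := by
  simp only [KernelDense, KernelSparse, not_exists, not_forall, not_le, gt_iff_lt]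

theorem numClasses_le_of_reflects {R S : Setoid (List Bool)} {f : List Bool → List Bool} {m n : ℕ}
    (hlen : ∀ x, x.length ≤ n → (f x).length ≤ m) (hf : ∀ x y, S (f x) (f y) → R x y) :
    numClasses R n ≤ numClasses S m := by
  have hfactor : (Quotient.mk R).FactorsThrough (Quotient.mk S ∘ f) :=
    fun x y hxy ↦ Quotient.sound (hf x y (Quotient.exact hxy))
  obtain ⟨g, hg⟩ := (Function.factorsThrough_iff _).1 hfactor
  have hfinite : {w : List Bool | w.length ≤ m}.Finite := List.finite_length_le Bool m
  have himage : f '' {w | w.length ≤ n} ⊆ {w | w.length ≤ m} := Set.image_subset_iff.2 hlen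
  calc
    numClasses R n = (g '' (Quotient.mk S '' (f '' {w | w.length ≤ n}))).ncard := by
      rw [numClasses, hg, Set.image_comp, Set.image_comp]
    _ ≤ (Quotient.mk S '' (f '' {w | w.length ≤ n})).ncard :=
      Set.ncard_image_le ((hfinite.subset himage).image _)
    _ ≤ numClasses S m := Set.ncard_le_ncard (Set.image_mono himage) (hfinite.image _)

theorem KernelSparse.of_reflects {R S : Setoid (List Bool)} (hS : KernelSparse S)
    {f : List Bool → List Bool} {p : Polynomial ℕ} (hlen : ∀ x, (f x).length ≤ p.eval x.length)
    (hf : ∀ x y, S (f x) (f y) → R x y) : KernelSparse R := by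
  obtain ⟨q, hq⟩ := hS
  refine ⟨q.comp p, fun n ↦ ?_⟩
  calc
    numClasses R n ≤ numClasses S (p.eval n) :=
      numClasses_le_of_reflects (fun x hx ↦ (hlen x).trans (monotone_polynomial_eval p hx)) hf
    _ ≤ q.eval (p.eval n) := hq _
    _ = (q.comp p).eval n := Polynomial.eval_comp.symm

theorem no_kernel_reduction_dense_to_sparse_general
    (R S : Setoid (List Bool)) (hR : KernelDense R) (hS : KernelSparse S) :
    ¬ ∃ (f : List Bool → List Bool) (p : Polynomial ℕ),
        (∀ x : List Bool, (f x).length ≤ p.eval x.length) ∧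
        (∀ x y : List Bool, S.r (f x) (f y) → R.r x y) := by
  rintro ⟨f, p, hlen, hf⟩
  exact kernelDense_iff_not_kernelSparse.1 hR (hS.of_reflects hlen hf)

/-- There is no polynomially length-bounded kernel reduction from a
kernel dense equivalence relation to a kernel sparse one. -/
theorem no_kernel_reduction_dense_to_sparse
    (R S : Setoid (List Bool)) (hR : KernelDense R) (hS : KernelSparse S) :
    ¬ ∃ (f : List Bool → List Bool) (p : Polynomial ℕ),
        (∀ x : List Bool, (f x).length ≤ p.eval x.length) ∧
        (∀ x y : List Bool, R.r x y ↔ S.r (f x) (f y)) := by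
  rintro ⟨f, p, hlen, hf⟩
  exact no_kernel_reduction_dense_to_sparse_general R S hR hS ⟨f, p, hlen, fun x y ↦ (hf x y).2⟩
end

section
/- Define equivalence relations R₀ and S₀ on List Bool by: R₀ x y iff x.length = y.length or (x.length ≤ 1 and y.length ≤ 1); and S₀ x y iff x and y lie in the same block Sₙ, where S₁ = {w | w.length ≤ 8} and, for n ≥ 2, Sₙ = {w | n^(n+1) + 1 ≤ w.length ≤ (n+1)^(n+2)}. Then there is no polynomially length-bounded kernel reduction from R₀ to S₀: for every function f : List Bool → List Bool and every polynomial p : Polynomial ℕ with (f x).length ≤ p.eval x.length for all x, it is not the case that for all x y, R₀ x y ↔ S₀ (f x) (f y). -/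
/-- The block `Sₙ` from the construction: `S₁` consists of all strings of length at
most `8 = p₂(2)`, and for `n ≥ 2`, `Sₙ` consists of the strings `w` with
`n^(n+1) + 1 ≤ w.length ≤ (n+1)^(n+2)`. -/
def SBlock (n : ℕ) : Set (List Bool) :=
  if n = 1 then {w : List Bool | w.length ≤ 8}
  else {w : List Bool | n ^ (n + 1) + 1 ≤ w.length ∧ w.length ≤ (n + 1) ^ (n + 2)}

/-- The relation `R₀`: same length, with lengths `0` and `1` merged into one class. -/
def R0 (x y : List Bool) : Prop :=
  x.length = y.length ∨ (x.length ≤ 1 ∧ y.length ≤ 1)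

/-- The relation `S₀`: `x` and `y` are related iff they lie in the same block `Sₙ`. -/
def S0 (x y : List Bool) : Prop :=
  ∃ n : ℕ, 1 ≤ n ∧ x ∈ SBlock n ∧ y ∈ SBlock n

/-! For `n ≥ 2`, a string of length at most `n ^ (n + 1)` lies in one of the `n - 1` blocks
`S₁, …, Sₙ₋₁`, whereas the strings of lengths `1, …, n` represent `n` distinct classes of `R₀`.
Hence a map separating the classes of `R₀` sends one of these strings to a string longer than
`n ^ (n + 1)`, and no polynomial in `n` keeps up with this growth. -/

theorem exists_mem_SBlock_of_length_le {n : ℕ} (hn : 2 ≤ n) {w : List Bool}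
    (hw : w.length ≤ n ^ (n + 1)) : ∃ k ∈ Finset.Ico 1 n, w ∈ SBlock k := by
  induction n, hn using Nat.le_induction with
  | base => exact ⟨1, by simp, by simpa [SBlock] using hw⟩
  | succ n hn ih =>
    rcases le_or_gt w.length (n ^ (n + 1)) with hshort | hlong
    · obtain ⟨k, hk, hwk⟩ := ih hshort
      exact ⟨k, Finset.Ico_subset_Ico_right n.le_succ hk, hwk⟩
    · have hn1 : n ≠ 1 := by omega
      refine ⟨n, by simp only [Finset.mem_Ico]; omega, ?_⟩
      rw [SBlock, if_neg hn1]
      exact ⟨hlong, hw⟩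

theorem exists_length_le_and_pow_lt_length_of_S0_imp_R0 {f : List Bool → List Bool}
    (hf : ∀ x y, S0 (f x) (f y) → R0 x y) {n : ℕ} (hn : 2 ≤ n) :
    ∃ x : List Bool, x.length ≤ n ∧ n ^ (n + 1) < (f x).length := by
  by_contra! hshort
  have hblock : ∀ m ∈ Finset.Icc 1 n,
      ∃ k ∈ Finset.Ico 1 n, f (List.replicate m true) ∈ SBlock k := fun m hm ↦
    exists_mem_SBlock_of_length_le hn <|
      hshort _ (List.length_replicate.trans_le (Finset.mem_Icc.mp hm).2)
  choose! block hblock_mem hmem_block using hblock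
  obtain ⟨a, ha, b, hb, hab, hblock_eq⟩ :=
    Finset.exists_ne_map_eq_of_card_lt_of_maps_to (f := block)
      (by simp only [Nat.card_Ico, Nat.card_Icc]; omega) hblock_mem
  have hS0 : S0 (f (List.replicate a true)) (f (List.replicate b true)) :=
    ⟨block a, (Finset.mem_Ico.mp (hblock_mem a ha)).1, hmem_block a ha,
      hblock_eq ▸ hmem_block b hb⟩
  have hR0 := hf _ _ hS0
  simp only [R0, List.length_replicate] at hR0
  simp only [Finset.mem_Icc] at ha hb
  omega

section PolynomialGrowth

open Polynomial

theorem eval_le_eval_one_mul_pow_natDegree {R : Type*} [Semiring R] [PartialOrder R]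
    [IsOrderedRing R] {p : R[X]} (hp : ∀ i, 0 ≤ p.coeff i) {x y : R} (hx : 0 ≤ x) (hxy : x ≤ y)
    (hy : 1 ≤ y) : p.eval x ≤ p.eval 1 * y ^ p.natDegree := by
  simp only [eval_eq_sum_range, one_pow, mul_one, Finset.sum_mul]
  refine Finset.sum_le_sum fun i hi ↦ mul_le_mul_of_nonneg_left ?_ (hp i)
  calc
    x ^ i ≤ y ^ i := pow_le_pow_left₀ hx hxy i
    _ ≤ y ^ p.natDegree := pow_le_pow_right₀ hy (Finset.mem_range_succ_iff.mp hi)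

theorem eventually_forall_le_eval_le_pow_self (p : ℕ[X]) :
    ∀ᶠ n : ℕ in Filter.atTop, ∀ m ≤ n, p.eval m ≤ n ^ n := by
  filter_upwards [Filter.eventually_ge_atTop (p.eval 1),
    Filter.eventually_gt_atTop p.natDegree] with n hcoeff hdegree m hm
  calc
    p.eval m ≤ p.eval 1 * n ^ p.natDegree :=
      eval_le_eval_one_mul_pow_natDegree (fun _ ↦ Nat.zero_le _) (Nat.zero_le m) hm (by omega)
    _ ≤ n * n ^ p.natDegree := Nat.mul_le_mul_right _ hcoeff
    _ = n ^ (p.natDegree + 1) := (pow_succ' n p.natDegree).symm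
    _ ≤ n ^ n := Nat.pow_le_pow_right (by omega) hdegree

end PolynomialGrowth

theorem no_kernel_reduction_R0_to_S0_general (f : List Bool → List Bool) (p : Polynomial ℕ)
    (hp : ∀ x : List Bool, (f x).length ≤ p.eval x.length) :
    ¬ (∀ x y : List Bool, S0 (f x) (f y) → R0 x y) := by
  intro hf
  obtain ⟨n, hpoly, hn⟩ := ((eventually_forall_le_eval_le_pow_self p).and
    (Filter.eventually_ge_atTop 2)).exists
  obtain ⟨x, hx, hlong⟩ := exists_length_le_and_pow_lt_length_of_S0_imp_R0 hf hn
  refine hlong.not_ge ?_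
  calc
    (f x).length ≤ p.eval x.length := hp x
    _ ≤ n ^ n := hpoly _ hx
    _ ≤ n ^ (n + 1) := Nat.pow_le_pow_right (by omega) n.le_succ

/-- there is no polynomially length-bounded kernel reduction from
`R₀` to `S₀`. -/
theorem no_kernel_reduction_R0_to_S0 :
    ∀ (f : List Bool → List Bool) (p : Polynomial ℕ),
      (∀ x : List Bool, (f x).length ≤ p.eval x.length) →
      ¬ (∀ x y : List Bool, R0 x y ↔ S0 (f x) (f y)) := by
  intro f p hp hf
  exact no_kernel_reduction_R0_to_S0_general f p hp fun x y ↦ (hf x y).2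
end

section
/- Define equivalence relations R₀ and S₀ on List Bool by: R₀ x y iff x.length = y.length or (x.length ≤ 1 and y.length ≤ 1); and S₀ x y iff x and y lie in the same block Sₙ, where S₁ = {w | w.length ≤ 8} and, for n ≥ 2, Sₙ = {w | n^(n+1) + 1 ≤ w.length ≤ (n+1)^(n+2)}. Then the language of R₀ many-one reduces to the language of S₀: (fun a : List Bool × List Bool => R₀ a.1 a.2) ≤₀ (fun a : List Bool × List Bool => S₀ a.1 a.2). -/
/-!
A decidable predicate many-one reduces to every predicate that holds somewhere and fails somewhere:
decide the instance and output a fixed positive or a fixed negative one. Comparing lengths decides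
`R0`, and `S0` both holds and fails because the block of the empty string contains exactly the
strings of length at most `8`.
-/

theorem manyOneReducible_of_computablePred {α β : Type*} [Primcodable α] [Primcodable β]
    {p : α → Prop} {q : β → Prop} (hp : ComputablePred p) {yes no : β} (hyes : q yes)
    (hno : ¬ q no) : p ≤₀ q := by
  obtain ⟨_, hdec⟩ := hp
  refine ⟨fun a ↦ bif decide (p a) then yes else no,
    hdec.cond (Computable.const yes) (Computable.const no), fun a ↦ ?_⟩
  by_cases ha : p a <;> simp [ha, hyes, hno]

theorem primrecRel_R0 : PrimrecRel R0 := by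
  have hfst : Primrec fun a : List Bool × List Bool ↦ a.1.length :=
    Primrec.list_length.comp Primrec.fst
  have hsnd : Primrec fun a : List Bool × List Bool ↦ a.2.length :=
    Primrec.list_length.comp Primrec.snd
  have hle_one : PrimrecPred fun n : ℕ ↦ n ≤ 1 :=
    Primrec.nat_le.comp Primrec.id (Primrec.const 1)
  exact (Primrec.eq.comp hfst hsnd).or ((hle_one.comp hfst).and (hle_one.comp hsnd))

theorem mem_SBlock_one {w : List Bool} : w ∈ SBlock 1 ↔ w.length ≤ 8 := by
  simp [SBlock]

theorem nil_mem_SBlock_iff {n : ℕ} : [] ∈ SBlock n ↔ n = 1 := by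
  by_cases hn : n = 1 <;> simp [SBlock, hn]

theorem S0_nil_left_iff {w : List Bool} : S0 [] w ↔ w.length ≤ 8 := by
  simp [S0, nil_mem_SBlock_iff, mem_SBlock_one]

/-- the language of `R₀` many-one reduces to the language of `S₀`. -/
theorem R0_manyOneReducible_S0 :
    (fun a : List Bool × List Bool => R0 a.1 a.2) ≤₀
      (fun a : List Bool × List Bool => S0 a.1 a.2) := by
  have hR0 : ComputablePred fun a : List Bool × List Bool ↦ R0 a.1 a.2 :=
    primrecRel_R0.computablePred
  have hrelated : S0 [] [] := S0_nil_left_iff.mpr (by simp)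
  have hunrelated : ¬ S0 [] (List.replicate 9 true) := by simp [S0_nil_left_iff]
  exact manyOneReducible_of_computablePred (yes := ([], [])) (no := ([], List.replicate 9 true))
    hR0 hrelated hunrelated
end

section
/- Let S₁ be the equivalence relation on List Bool relating x and y iff x.count true = y.count true (x and y have the same number of 1s). Every equivalence class of S₁ is infinite. Consequently, for any equivalence relation A on a type β all of whose equivalence classes {y | A b y} are finite, no kernel reduction f : List Bool → β from S₁ to A is injective. -/
theorem infinite_setOf_count_eq {α : Type*} [BEq α] [LawfulBEq α] [Nontrivial α] (a : α) (n : ℕ) :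
    {x : List α | x.count a = n}.Infinite := by
  obtain ⟨b, hba⟩ := exists_ne a
  let pad (k : ℕ) : List α := List.replicate k b ++ List.replicate n a
  have pad_injective : Function.Injective pad :=
    (List.append_left_injective _).comp (List.replicate_left_injective b)
  have count_pad (k : ℕ) : (pad k).count a = n := by
    simp [pad, List.count_append, List.count_replicate, hba]
  exact Set.infinite_of_injective_forall_mem pad_injective count_pad

theorem not_injOn_relHom_of_infinite_of_finite {α β : Type*} {r : α → α → Prop} {s : β → β → Prop}
    (f : r →r s) {x : α} (hr : {y | r x y}.Infinite) (hs : {z | s (f x) z}.Finite) :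
    ¬ Set.InjOn f {y | r x y} :=
  fun f_injOn => Set.infinite_of_injOn_mapsTo f_injOn (fun _ hy => f.map_rel hy) hr hs

theorem same_count_classes_infinite_and_no_injective_reduction_general
    {α : Type*} [BEq α] [LawfulBEq α] [Nontrivial α] (a : α) :
    (∀ w : List α, {x : List α | x.count a = w.count a}.Infinite) ∧
    ∀ (β : Type*) (A : β → β → Prop) (f : List α → β),
      (∀ x y : List α, x.count a = y.count a → A (f x) (f y)) →
      ∀ w : List α, {y : β | A (f w) y}.Finite →
        ¬ Set.InjOn f {x : List α | x.count a = w.count a} := by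
  have class_infinite (w : List α) : {x : List α | x.count a = w.count a}.Infinite :=
    infinite_setOf_count_eq a (w.count a)
  refine ⟨class_infinite, fun β A f hf w hfin => ?_⟩
  let F : (fun x y : List α => y.count a = x.count a) →r A := ⟨f, fun h => hf _ _ h.symm⟩
  exact not_injOn_relHom_of_infinite_of_finite F (class_infinite w) hfin

/-- Every equivalence class of the "same number of 1s" relation on
binary strings is infinite; consequently, no kernel reduction from it to an
equivalence relation all of whose classes are finite is injective. -/
theorem same_count_classes_infinite_and_no_injective_reduction :
    (∀ w : List Bool, {x : List Bool | x.count true = w.count true}.Infinite) ∧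
    ∀ (β : Type*) (A : β → β → Prop), Equivalence A →
      (∀ b : β, {y : β | A b y}.Finite) →
      ∀ f : List Bool → β,
        (∀ x y : List Bool, x.count true = y.count true ↔ A (f x) (f y)) →
        ¬ Function.Injective f := by
  obtain ⟨hinf, hred⟩ := same_count_classes_infinite_and_no_injective_reduction_general true
  exact ⟨hinf, fun β A _ hfin f hf f_inj =>
    hred β A f (fun x y => (hf x y).1) [] (hfin (f [])) f_inj.injOn⟩
end
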